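/- Assume two copies (i = 1, 2) of the element setup, with boundary spaces B_p⁽¹⁾ = Z₁ × Z and B_p⁽²⁾ = Z₂ × Z sharing the common interface space Z, and let D_h⁽¹⁾, D_h⁽²⁾ denote the corresponding generalized Stokes–Dirac structures and D_c the interconnection structure on Z with parameter θ ∈ [0,1]. Suppose for i = 1, 2 the tuple (f_pⁱ, f_qⁱ, (y_i, y_Zⁱ), (y*_i, y_Z*ⁱ), e_pⁱ, e_qⁱ, (u*_i, u_Z*ⁱ), (u_i, u_Zⁱ)) belongs to D_h⁽ⁱ⁾, and suppose (u_Z¹, u_Z², u_Z*¹, u_Z*², y_Z*¹, y_Z*², y_Z¹, y_Z²) belongs to D_c. Then the total power balance holds: ⟨e_p¹|f_p¹⟩_p + ⟨e_q¹|f_q¹⟩_q + ⟨e_p²|f_p²⟩_p + ⟨e_q²|f_q²⟩_q + y*₁(u₁) + u*₁(y₁) + y*₂(u₂) + u*₂(y₂) = 0. -/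

import Mathlib

/-- Every element of the generalized Stokes-Dirac structure has zero net power; the boundary
space is a product `Z₁ × Z` whose dual is identified componentwise. -/
theorem stokesDirac_power_balance (n p q : ℤ) (hpq : p + q = n + 1)
    {E_p F_p E_q F_q B_q Z₁ Z : Type*}
    [AddCommGroup E_p] [Module ℝ E_p] [AddCommGroup F_p] [Module ℝ F_p]
    [AddCommGroup E_q] [Module ℝ E_q] [AddCommGroup F_q] [Module ℝ F_q]
    [AddCommGroup B_q] [Module ℝ B_q] [AddCommGroup Z₁] [Module ℝ Z₁]
    [AddCommGroup Z] [Module ℝ Z]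
    (pairP : E_p →ₗ[ℝ] F_p →ₗ[ℝ] ℝ) (pairQ : E_q →ₗ[ℝ] F_q →ₗ[ℝ] ℝ)
    (dpq : E_q →ₗ[ℝ] F_p) (dqp : E_p →ₗ[ℝ] F_q)
    (trp : E_p →ₗ[ℝ] Z₁ × Z) (trq : E_q →ₗ[ℝ] B_q)
    (Q : B_q →ₗ[ℝ] Module.Dual ℝ Z₁ × Module.Dual ℝ Z)
    (hibp : ∀ (w : E_q) (v : E_p),
      (-1 : ℝ) ^ (p * (n - p)) * pairP v (dpq w)
        = (-1 : ℝ) ^ p * pairQ w (dqp v)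
          + ((Q (trq w)).1 (trp v).1 + (Q (trq w)).2 (trp v).2))
    (T_p : Module.Dual ℝ Z₁ × Module.Dual ℝ Z →ₗ[ℝ] F_p)
    (hTp : ∀ (v : E_p) (l : Module.Dual ℝ Z₁ × Module.Dual ℝ Z),
      pairP v (T_p l)
        = (-1 : ℝ) ^ ((p - 1) * (q - 1)) * (l.1 (trp v).1 + l.2 (trp v).2))
    (T_q : Z₁ × Z →ₗ[ℝ] F_q)
    (hTq : ∀ (w : E_q) (u : Z₁ × Z),
      pairQ w (T_q u) = (Q (trq w)).1 u.1 + (Q (trq w)).2 u.2)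
    (f_p : F_p) (f_q : F_q) (e_p : E_p) (e_q : E_q)
    (y : Z₁) (yZ : Z) (ystar : Module.Dual ℝ Z₁) (ystarZ : Module.Dual ℝ Z)
    (u : Z₁) (uZ : Z) (ustar : Module.Dual ℝ Z₁) (ustarZ : Module.Dual ℝ Z)
    (hfp : f_p = ((-1 : ℝ) ^ (p * q + 1)) • dpq e_q
        + (((-1 : ℝ) ^ (p * q + 1 + q)) * (1 / 2)) • T_p (Q (trq e_q))
        + ((-1 : ℝ) ^ (p * q + 1 + q)) • T_p (ustar, ustarZ))
    (hfq : f_q = dqp e_p + (((-1 : ℝ) ^ p) * (1 / 2)) • T_q (trp e_p)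
        + ((-1 : ℝ) ^ p) • T_q (u, uZ))
    (hystar : (ystar, ystarZ) = -(((-1 : ℝ) ^ p) • Q (trq e_q)))
    (hy : (y, yZ) = -(((-1 : ℝ) ^ p) • trp e_p)) :
    pairP e_p f_p + pairQ e_q f_q + (ystar u + ystarZ uZ) + (ustar y + ustarZ yZ) = 0 := by
  obtain ⟨rfl, rfl⟩ := Prod.mk.inj hystar
  obtain ⟨rfl, rfl⟩ := Prod.mk.inj hy
  have hibp' := hibp e_q e_p
  have hn : n - p = q - 1 := by lia
  subst hfp hfq
  simp only [map_add, map_smul, smul_eq_mul, hTp, hTq,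
    Prod.smul_fst, Prod.smul_snd, LinearMap.neg_apply, LinearMap.smul_apply, map_neg]
  rw [hn] at hibp'
  rcases Int.even_or_odd p with hp | hp <;> rcases Int.even_or_odd q with hq | hq <;>
    simp [hp.neg_one_zpow, hq.neg_one_zpow, zpow_mul, zpow_add₀, zpow_sub₀] at hibp' ⊢ <;>
    linarith

/-- Total power balance of two elements coupled through the interconnection structure:
for two copies of the element setup with boundary spaces `B_p⁽¹⁾ = Z₁ × Z` and
`B_p⁽²⁾ = Z₂ × Z` sharing the interface space `Z`, if each tuple belongs to the
corresponding generalized Stokes-Dirac structure and the interface ports are coupled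
through the interconnection structure `D_c` on `Z`, then
`⟨e_p¹|f_p¹⟩ + ⟨e_q¹|f_q¹⟩ + ⟨e_p²|f_p²⟩ + ⟨e_q²|f_q²⟩ + y*₁(u₁) + u*₁(y₁)
+ y*₂(u₂) + u*₂(y₂) = 0`. -/
theorem coupled_elements_total_power_balance
    (n p q : ℤ) (hpq : p + q = n + 1)
    {E_p₁ F_p₁ E_q₁ F_q₁ B_q₁ E_p₂ F_p₂ E_q₂ F_q₂ B_q₂ Z₁ Z₂ Z : Type*}
    [AddCommGroup E_p₁] [Module ℝ E_p₁] [FiniteDimensional ℝ E_p₁]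
    [AddCommGroup F_p₁] [Module ℝ F_p₁] [FiniteDimensional ℝ F_p₁]
    [AddCommGroup E_q₁] [Module ℝ E_q₁] [FiniteDimensional ℝ E_q₁]
    [AddCommGroup F_q₁] [Module ℝ F_q₁] [FiniteDimensional ℝ F_q₁]
    [AddCommGroup B_q₁] [Module ℝ B_q₁] [FiniteDimensional ℝ B_q₁]
    [AddCommGroup E_p₂] [Module ℝ E_p₂] [FiniteDimensional ℝ E_p₂]
    [AddCommGroup F_p₂] [Module ℝ F_p₂] [FiniteDimensional ℝ F_p₂]
    [AddCommGroup E_q₂] [Module ℝ E_q₂] [FiniteDimensional ℝ E_q₂]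
    [AddCommGroup F_q₂] [Module ℝ F_q₂] [FiniteDimensional ℝ F_q₂]
    [AddCommGroup B_q₂] [Module ℝ B_q₂] [FiniteDimensional ℝ B_q₂]
    [AddCommGroup Z₁] [Module ℝ Z₁] [FiniteDimensional ℝ Z₁]
    [AddCommGroup Z₂] [Module ℝ Z₂] [FiniteDimensional ℝ Z₂]
    [AddCommGroup Z] [Module ℝ Z] [FiniteDimensional ℝ Z]
    -- element setup for element 1:
    (pairP₁ : E_p₁ →ₗ[ℝ] F_p₁ →ₗ[ℝ] ℝ)
    (hP₁₁ : ∀ e : E_p₁, (∀ f : F_p₁, pairP₁ e f = 0) → e = 0)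
    (hP₁₂ : ∀ f : F_p₁, (∀ e : E_p₁, pairP₁ e f = 0) → f = 0)
    (pairQ₁ : E_q₁ →ₗ[ℝ] F_q₁ →ₗ[ℝ] ℝ)
    (hQ₁₁ : ∀ e : E_q₁, (∀ f : F_q₁, pairQ₁ e f = 0) → e = 0)
    (hQ₁₂ : ∀ f : F_q₁, (∀ e : E_q₁, pairQ₁ e f = 0) → f = 0)
    (dpq₁ : E_q₁ →ₗ[ℝ] F_p₁) (dqp₁ : E_p₁ →ₗ[ℝ] F_q₁)
    (trp₁ : E_p₁ →ₗ[ℝ] Z₁ × Z) (trq₁ : E_q₁ →ₗ[ℝ] B_q₁)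
    (Q₁ : B_q₁ →ₗ[ℝ] Module.Dual ℝ Z₁ × Module.Dual ℝ Z)
    (hibp₁ : ∀ (w : E_q₁) (v : E_p₁),
      (-1 : ℝ) ^ (p * (n - p)) * pairP₁ v (dpq₁ w)
        = (-1 : ℝ) ^ p * pairQ₁ w (dqp₁ v)
          + ((Q₁ (trq₁ w)).1 (trp₁ v).1 + (Q₁ (trq₁ w)).2 (trp₁ v).2))
    (T_p₁ : Module.Dual ℝ Z₁ × Module.Dual ℝ Z →ₗ[ℝ] F_p₁)
    (hTp₁ : ∀ (v : E_p₁) (l : Module.Dual ℝ Z₁ × Module.Dual ℝ Z),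
      pairP₁ v (T_p₁ l)
        = (-1 : ℝ) ^ ((p - 1) * (q - 1)) * (l.1 (trp₁ v).1 + l.2 (trp₁ v).2))
    (T_q₁ : Z₁ × Z →ₗ[ℝ] F_q₁)
    (hTq₁ : ∀ (w : E_q₁) (u : Z₁ × Z),
      pairQ₁ w (T_q₁ u) = (Q₁ (trq₁ w)).1 u.1 + (Q₁ (trq₁ w)).2 u.2)
    -- element setup for element 2:
    (pairP₂ : E_p₂ →ₗ[ℝ] F_p₂ →ₗ[ℝ] ℝ)
    (hP₂₁ : ∀ e : E_p₂, (∀ f : F_p₂, pairP₂ e f = 0) → e = 0)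
    (hP₂₂ : ∀ f : F_p₂, (∀ e : E_p₂, pairP₂ e f = 0) → f = 0)
    (pairQ₂ : E_q₂ →ₗ[ℝ] F_q₂ →ₗ[ℝ] ℝ)
    (hQ₂₁ : ∀ e : E_q₂, (∀ f : F_q₂, pairQ₂ e f = 0) → e = 0)
    (hQ₂₂ : ∀ f : F_q₂, (∀ e : E_q₂, pairQ₂ e f = 0) → f = 0)
    (dpq₂ : E_q₂ →ₗ[ℝ] F_p₂) (dqp₂ : E_p₂ →ₗ[ℝ] F_q₂)
    (trp₂ : E_p₂ →ₗ[ℝ] Z₂ × Z) (trq₂ : E_q₂ →ₗ[ℝ] B_q₂)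
    (Q₂ : B_q₂ →ₗ[ℝ] Module.Dual ℝ Z₂ × Module.Dual ℝ Z)
    (hibp₂ : ∀ (w : E_q₂) (v : E_p₂),
      (-1 : ℝ) ^ (p * (n - p)) * pairP₂ v (dpq₂ w)
        = (-1 : ℝ) ^ p * pairQ₂ w (dqp₂ v)
          + ((Q₂ (trq₂ w)).1 (trp₂ v).1 + (Q₂ (trq₂ w)).2 (trp₂ v).2))
    (T_p₂ : Module.Dual ℝ Z₂ × Module.Dual ℝ Z →ₗ[ℝ] F_p₂)
    (hTp₂ : ∀ (v : E_p₂) (l : Module.Dual ℝ Z₂ × Module.Dual ℝ Z),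
      pairP₂ v (T_p₂ l)
        = (-1 : ℝ) ^ ((p - 1) * (q - 1)) * (l.1 (trp₂ v).1 + l.2 (trp₂ v).2))
    (T_q₂ : Z₂ × Z →ₗ[ℝ] F_q₂)
    (hTq₂ : ∀ (w : E_q₂) (u : Z₂ × Z),
      pairQ₂ w (T_q₂ u) = (Q₂ (trq₂ w)).1 u.1 + (Q₂ (trq₂ w)).2 u.2)
    (θ : ℝ) (hθ : θ ∈ Set.Icc (0 : ℝ) 1)
    -- port variables of element 1:
    (f_p₁ : F_p₁) (f_q₁ : F_q₁) (e_p₁ : E_p₁) (e_q₁ : E_q₁)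
    (y₁ : Z₁) (yZ₁ : Z) (ystar₁ : Module.Dual ℝ Z₁) (ystarZ₁ : Module.Dual ℝ Z)
    (u₁ : Z₁) (uZ₁ : Z) (ustar₁ : Module.Dual ℝ Z₁) (ustarZ₁ : Module.Dual ℝ Z)
    -- port variables of element 2:
    (f_p₂ : F_p₂) (f_q₂ : F_q₂) (e_p₂ : E_p₂) (e_q₂ : E_q₂)
    (y₂ : Z₂) (yZ₂ : Z) (ystar₂ : Module.Dual ℝ Z₂) (ystarZ₂ : Module.Dual ℝ Z)
    (u₂ : Z₂) (uZ₂ : Z) (ustar₂ : Module.Dual ℝ Z₂) (ustarZ₂ : Module.Dual ℝ Z)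
    -- the tuple of element 1 belongs to `D_h⁽¹⁾`:
    (hfp₁ : f_p₁ = ((-1 : ℝ) ^ (p * q + 1)) • dpq₁ e_q₁
        + (((-1 : ℝ) ^ (p * q + 1 + q)) * (1 / 2)) • T_p₁ (Q₁ (trq₁ e_q₁))
        + ((-1 : ℝ) ^ (p * q + 1 + q)) • T_p₁ (ustar₁, ustarZ₁))
    (hfq₁ : f_q₁ = dqp₁ e_p₁ + (((-1 : ℝ) ^ p) * (1 / 2)) • T_q₁ (trp₁ e_p₁)
        + ((-1 : ℝ) ^ p) • T_q₁ (u₁, uZ₁))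
    (hystar₁ : (ystar₁, ystarZ₁) = -(((-1 : ℝ) ^ p) • Q₁ (trq₁ e_q₁)))
    (hy₁ : (y₁, yZ₁) = -(((-1 : ℝ) ^ p) • trp₁ e_p₁))
    -- the tuple of element 2 belongs to `D_h⁽²⁾`:
    (hfp₂ : f_p₂ = ((-1 : ℝ) ^ (p * q + 1)) • dpq₂ e_q₂
        + (((-1 : ℝ) ^ (p * q + 1 + q)) * (1 / 2)) • T_p₂ (Q₂ (trq₂ e_q₂))
        + ((-1 : ℝ) ^ (p * q + 1 + q)) • T_p₂ (ustar₂, ustarZ₂))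
    (hfq₂ : f_q₂ = dqp₂ e_p₂ + (((-1 : ℝ) ^ p) * (1 / 2)) • T_q₂ (trp₂ e_p₂)
        + ((-1 : ℝ) ^ p) • T_q₂ (u₂, uZ₂))
    (hystar₂ : (ystar₂, ystarZ₂) = -(((-1 : ℝ) ^ p) • Q₂ (trq₂ e_q₂)))
    (hy₂ : (y₂, yZ₂) = -(((-1 : ℝ) ^ p) • trp₂ e_p₂))
    -- the interface ports belong to the interconnection structure `D_c` on `Z`:
    (hc₁ : uZ₁ = (θ - 1 / 2) • yZ₁ - θ • yZ₂)
    (hc₂ : ustarZ₁ = (1 / 2 - θ) • ystarZ₁ + (θ - 1) • ystarZ₂)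
    (hc₃ : uZ₂ = (1 - θ) • yZ₁ + (θ - 1 / 2) • yZ₂)
    (hc₄ : ustarZ₂ = θ • ystarZ₁ + (1 / 2 - θ) • ystarZ₂) :
    pairP₁ e_p₁ f_p₁ + pairQ₁ e_q₁ f_q₁ + pairP₂ e_p₂ f_p₂ + pairQ₂ e_q₂ f_q₂
      + ystar₁ u₁ + ustar₁ y₁ + ystar₂ u₂ + ustar₂ y₂ = 0 := by
  have h₁ := stokesDirac_power_balance n p q hpq pairP₁ pairQ₁ dpq₁ dqp₁ trp₁ trq₁ Q₁ hibp₁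
    T_p₁ hTp₁ T_q₁ hTq₁ f_p₁ f_q₁ e_p₁ e_q₁ y₁ yZ₁ ystar₁ ystarZ₁ u₁ uZ₁ ustar₁ ustarZ₁
    hfp₁ hfq₁ hystar₁ hy₁
  have h₂ := stokesDirac_power_balance n p q hpq pairP₂ pairQ₂ dpq₂ dqp₂ trp₂ trq₂ Q₂ hibp₂
    T_p₂ hTp₂ T_q₂ hTq₂ f_p₂ f_q₂ e_p₂ e_q₂ y₂ yZ₂ ystar₂ ystarZ₂ u₂ uZ₂ ustar₂ ustarZ₂
    hfp₂ hfq₂ hystar₂ hy₂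
  have hc : ystarZ₁ uZ₁ + ustarZ₁ yZ₁ + ystarZ₂ uZ₂ + ustarZ₂ yZ₂ = 0 := by
    simp only [hc₁, hc₂, hc₃, hc₄, map_add, map_sub, map_smul, smul_eq_mul,
      LinearMap.add_apply, LinearMap.smul_apply]
    ring
  linarith
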